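/- There is no nonnegative decimal (m, a) whose digit sequence is ultimately periodic (i.e., there exist p ≥ 1 and N₀ such that a (i+p) = a i for all i ≥ N₀) with truncation sequence t such that for every k : ℕ there exists N with ⌊10^k·(t n)²⌋ = 2·10^k − 1 for all n ≥ N. (In other words, the equation x² = 1.999… has no ultimately periodic solution among infinite decimals with multiplication defined by formal limits.) -/

import Mathlib

/-!
The floor conditions force `(t n)² → 2`, so the nonnegative truncations `t n` converge to `√2`.
If the digits have period `p` from index `N₀` on, then `10 ^ p * t (n + p) - t n` is constant for
`n ≥ N₀`, since one step changes both terms by `a n / 10 ^ (n + 1)`. Passing to the limit,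
`(10 ^ p - 1) * √2` is rational, contradicting the irrationality of `√2`.
-/

/-- The `n`-truncation of the nonnegative decimal `(m, a)`. -/
def trunc (m : ℕ) (a : ℕ → Fin 10) (n : ℕ) : ℚ :=
  m + ∑ i ∈ Finset.range n, (a i : ℚ) / 10 ^ (i + 1)

lemma trunc_succ (m : ℕ) (a : ℕ → Fin 10) (n : ℕ) :
    trunc m a (n + 1) = trunc m a n + (a n : ℚ) / 10 ^ (n + 1) := by
  simp only [trunc, Finset.sum_range_succ]
  ring

lemma trunc_nonneg (m : ℕ) (a : ℕ → Fin 10) (n : ℕ) : 0 ≤ trunc m a n := by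
  unfold trunc
  positivity

lemma shifted_trunc_const {m : ℕ} {a : ℕ → Fin 10} {p N₀ : ℕ}
    (h : ∀ i ≥ N₀, a (i + p) = a i) {n : ℕ} (hn : N₀ ≤ n) :
    10 ^ p * trunc m a (n + p) - trunc m a n =
      10 ^ p * trunc m a (N₀ + p) - trunc m a N₀ := by
  induction n, hn using Nat.le_induction with
  | base => rfl
  | succ n hn ih =>
    rw [← ih, show n + 1 + p = (n + p) + 1 by ring, trunc_succ, trunc_succ, h n hn,
      show n + p + 1 = p + (n + 1) by ring, pow_add]
    field_simp
    ring

/-- Formal convergence of the squares to `1.999…` makes them converge to `2` in `ℝ`. -/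
lemma tendsto_trunc_sq {m : ℕ} {a : ℕ → Fin 10}
    (h : ∀ k : ℕ, ∃ N : ℕ, ∀ n ≥ N,
      ⌊(10 : ℚ) ^ k * (trunc m a n) ^ 2⌋ = 2 * 10 ^ k - 1) :
    Filter.Tendsto (fun n => (trunc m a n : ℝ) ^ 2) Filter.atTop (nhds 2) := by
  rw [Metric.tendsto_atTop]
  intro ε hε
  obtain ⟨k, hk⟩ := exists_pow_lt_of_lt_one hε (by norm_num : (1 / 10 : ℝ) < 1)
  obtain ⟨N, hN⟩ := h k
  refine ⟨N, fun n hn => lt_of_le_of_lt ?_ hk⟩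
  obtain ⟨h₁, h₂⟩ := Int.floor_eq_iff.1 (hN n hn)
  have h₁' : (2 * 10 ^ k - 1 : ℝ) ≤ 10 ^ k * (trunc m a n : ℝ) ^ 2 := by exact_mod_cast h₁
  have h₂' : 10 ^ k * (trunc m a n : ℝ) ^ 2 < (2 * 10 ^ k - 1 : ℝ) + 1 := by exact_mod_cast h₂
  have hpos : (0 : ℝ) < 10 ^ k := by positivity
  rw [Real.dist_eq, one_div, inv_pow, ← one_div, le_div_iff₀ hpos, ← abs_of_pos hpos, ← abs_mul,
    abs_le]
  constructor <;> linarith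

/-- The equation `x² = 1.999…` has no ultimately periodic solution among infinite
decimals with multiplication defined by formal limits: there is no nonnegative decimal
with ultimately periodic digits whose squared truncations formally converge to
`1.999…`. -/
theorem no_periodic_decimal_sq_eq_one_point_nines :
    ¬ ∃ (m : ℕ) (a : ℕ → Fin 10),
        (∃ p : ℕ, 1 ≤ p ∧ ∃ N₀ : ℕ, ∀ i ≥ N₀, a (i + p) = a i) ∧
        ∀ k : ℕ, ∃ N : ℕ, ∀ n ≥ N,
          ⌊(10 : ℚ) ^ k * (trunc m a n) ^ 2⌋ = 2 * 10 ^ k - 1 := by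
  rintro ⟨m, a, ⟨p, hp, N₀, hper⟩, hsq⟩
  have hlim : Filter.Tendsto (fun n => (trunc m a n : ℝ)) Filter.atTop (nhds √2) := by
    refine (tendsto_trunc_sq hsq).sqrt.congr fun n => ?_
    exact Real.sqrt_sq (by exact_mod_cast trunc_nonneg m a n)
  obtain ⟨c, hc⟩ : ∃ c : ℚ, ∀ n ≥ N₀, 10 ^ p * trunc m a (n + p) - trunc m a n = c :=
    ⟨_, fun n hn => shifted_trunc_const hper hn⟩
  have hconst : Filter.Tendsto
      (fun n => (10 : ℝ) ^ p * (trunc m a (n + p) : ℝ) - (trunc m a n : ℝ))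
      Filter.atTop (nhds (c : ℝ)) := by
    refine tendsto_const_nhds.congr' ?_
    filter_upwards [Filter.eventually_ge_atTop N₀] with n hn
    exact_mod_cast (hc n hn).symm
  have heq : (10 : ℝ) ^ p * √2 - √2 = c :=
    tendsto_nhds_unique
      ((((Filter.tendsto_add_atTop_iff_nat p).2 hlim).const_mul _).sub hlim) hconst
  have hp1 : (1 : ℝ) < 10 ^ p := one_lt_pow₀ (by norm_num) (by omega)
  refine irrational_sqrt_two ⟨c / (10 ^ p - 1), ?_⟩
  push_cast
  rw [div_eq_iff (by linarith), ← heq]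
  ring
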